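/- Let G = (V, E) be a strongly connected digraph and let s ∈ V. If v ↔₂ₑ w, then the set of marked vertices of G(s) that dominate v in G(s) equals the set of marked vertices of G(s) that dominate w in G(s), and the set of marked vertices of G^R(s) that dominate v in G^R(s) equals the set of marked vertices of G^R(s) that dominate w in G^R(s). (Equivalently, v and w lie in the same subtree of the decomposition of the dominator tree of G(s) induced by removing the bridge edges, and likewise for G^R(s).) -/

import Mathlib

variable {V : Type*}

/-- `p` is a path from `u` to `w` in the digraph with edge set `E`:
a nonempty list of vertices starting at `u`, ending at `w`, with consecutive edges in `E`. -/
def IsPathFrom (E : Set (V × V)) (u w : V) (p : List V) : Prop :=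
  p.head? = some u ∧ p.getLast? = some w ∧ p.Chain' (fun a b => (a, b) ∈ E)

/-- There is a path from `u` to `w` in the digraph with edge set `E`. -/
def Reaches (E : Set (V × V)) (u w : V) : Prop :=
  ∃ p, IsPathFrom E u w p

/-- Every vertex has a path to every other vertex. -/
def StronglyConnected (E : Set (V × V)) : Prop :=
  ∀ u w : V, Reaches E u w

/-- `v` and `w` are 2-edge-connected: `v = w` or, for every edge `e`,
there are paths from `v` to `w` and from `w` to `v` avoiding `e`. -/
def TwoEdgeConn (E : Set (V × V)) (v w : V) : Prop :=
  v = w ∨ ∀ e ∈ E, Reaches (E \ {e}) v w ∧ Reaches (E \ {e}) w v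

/-- `w` is 2-edge-connected from `v`: for every edge `e` there is a path
from `v` to `w` avoiding `e`. -/
def TwoEdgeConnFrom (E : Set (V × V)) (v w : V) : Prop :=
  ∀ e ∈ E, Reaches (E \ {e}) v w

/-- `u` dominates `w` in the flow graph with start vertex `s`:
every path from `s` to `w` contains `u`. -/
def Dominates (E : Set (V × V)) (s u w : V) : Prop :=
  ∀ p, IsPathFrom E s w p → u ∈ p

/-- `(u, w)` is a bridge of the flow graph with start vertex `s`:
every path from `s` to `w` contains the edge `(u, w)`. -/
def IsBridge (E : Set (V × V)) (s u w : V) : Prop :=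
  (u, w) ∈ E ∧ ∀ p, IsPathFrom E s w p → (u, w) ∈ p.zip p.tail

/-- `w` is marked in the flow graph with start vertex `s`: some bridge ends at `w`. -/
def Marked (E : Set (V × V)) (s w : V) : Prop :=
  ∃ u, IsBridge E s u w

/-- The reverse digraph: every edge direction is reversed. -/
def reverseE (E : Set (V × V)) : Set (V × V) :=
  {e | (e.2, e.1) ∈ E}

/-- `u` and `w` are mutually reachable. -/
def MutualReach (E : Set (V × V)) (u w : V) : Prop :=
  Reaches E u w ∧ Reaches E w u

/-- The number of strongly connected components: the number of equivalence
classes of the mutual-reachability relation. -/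
noncomputable def numSCC (E : Set (V × V)) : ℕ :=
  Nat.card (Quot (MutualReach E))

/-- `e` is a strong bridge: removing it increases the number of strongly
connected components. -/
def IsStrongBridge (E : Set (V × V)) (e : V × V) : Prop :=
  e ∈ E ∧ numSCC E < numSCC (E \ {e})

/-- `d` is the immediate dominator of `w` in the flow graph with start vertex `s`:
`d` is a proper dominator of `w` dominated by every proper dominator of `w`. -/
def ImmDomIs (E : Set (V × V)) (s w d : V) : Prop :=
  Dominates E s d w ∧ d ≠ w ∧ ∀ x, Dominates E s x w → x ≠ w → Dominates E s x d

/-- `r` is the deepest marked dominator `r_v` of `v`: either `r` is a marked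
dominator of `v` dominated by every marked dominator of `v`, or no marked vertex
dominates `v` and `r = s`. -/
def DeepestMarkedDomIs (E : Set (V × V)) (s v r : V) : Prop :=
  (Marked E s r ∧ Dominates E s r v ∧
    ∀ x, Marked E s x → Dominates E s x v → Dominates E s x r)
  ∨ (r = s ∧ ∀ x, Marked E s x → ¬ Dominates E s x v)

/-- `T(r)`: the vertices whose deepest marked dominator is `r`. -/
def Tset (E : Set (V × V)) (s r : V) : Set V :=
  {v | DeepestMarkedDomIs E s v r}

/-- The roots of the decomposition of the dominator tree: `s` and the marked vertices. -/
def IsRoot (E : Set (V × V)) (s r : V) : Prop :=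
  r = s ∨ Marked E s r

/-- `z` is a marked child (in the dominator tree) of a boundary vertex of `T(r)`. -/
def MarkedChildOfBoundary (E : Set (V × V)) (s r z : V) : Prop :=
  Marked E s z ∧ ∃ x ∈ Tset E s r, ImmDomIs E s z x

/-- The vertex set `V_r` of the auxiliary graph `G_r` (with `dr` playing the role
of `d(r)` when `r ≠ s`): the ordinary vertices `T(r)`, the marked children of
boundary vertices of `T(r)`, and (if `r ≠ s`) the vertex `d(r)`. -/
def auxVerts (E : Set (V × V)) (s r dr : V) : Set V :=
  Tset E s r ∪ {z | MarkedChildOfBoundary E s r z} ∪ {x | r ≠ s ∧ x = dr}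

/-- The edge set `E_r` of the auxiliary graph `G_r` (with `dr` playing the role of
`d(r)` when `r ≠ s`): edges of `G` between ordinary vertices; the edge `(v, w)` for
each boundary vertex `v ∈ T(r)` and marked child `w` of `v`; the edge `(d(r), r)` if
`r ≠ s`; and the shortcut edges of types (a), (b), (c). -/
def auxEdges (E : Set (V × V)) (s r dr : V) : Set (V × V) :=
  {e | e ∈ E ∧ e.1 ∈ Tset E s r ∧ e.2 ∈ Tset E s r} ∪
  {e | e.1 ∈ Tset E s r ∧ Marked E s e.2 ∧ ImmDomIs E s e.2 e.1} ∪
  {e | r ≠ s ∧ e = (dr, r)} ∪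
  {e | ∃ u v, (u, v) ∈ E ∧ u ∈ Tset E s r ∧ ¬ Dominates E s r v ∧ e = (u, dr)} ∪
  {e | ∃ u v z, (u, v) ∈ E ∧ v ∈ Tset E s r ∧ Dominates E s r u ∧ u ∉ Tset E s r ∧
      MarkedChildOfBoundary E s r z ∧ Dominates E s z u ∧ e = (z, v)} ∪
  {e | ∃ u v z, (u, v) ∈ E ∧ Dominates E s r u ∧ u ∉ Tset E s r ∧ ¬ Dominates E s r v ∧
      MarkedChildOfBoundary E s r z ∧ Dominates E s z u ∧ e = (z, dr)}

/-!
Deleting a bridge `(u, x)` of `G(s)` disconnects from `s` exactly the vertices dominated by `x`: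
a path avoiding `x` avoids the bridge, and a path meeting `x` has a prefix from `s` to `x`, which
uses the bridge. Two 2-edge-connected vertices stay mutually reachable when the bridge is deleted,
so they are both disconnected from `s` or both still reachable, which gives the claim for `G(s)`.
Since 2-edge-connectivity is invariant under reversal, the same holds for `G^R(s)`.
-/

section Paths

variable {E F : Set (V × V)} {s u v w x : V} {p : List V}

theorem IsPathFrom.mono (hEF : E ⊆ F) (hp : IsPathFrom E u w p) : IsPathFrom F u w p :=
  ⟨hp.1, hp.2.1, hp.2.2.imp fun _ _ hab => hEF hab⟩

theorem IsPathFrom.sdiff_of_notMem (hp : IsPathFrom E s w p) (hx : x ∉ p) :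
    IsPathFrom (E \ {(u, x)}) s w p := by
  refine ⟨hp.1, hp.2.1, hp.2.2.imp_of_mem_imp fun a b _ hb hab => ⟨hab, ?_⟩⟩
  rintro ⟨⟩
  exact hx hb

theorem IsPathFrom.mem_of_mem_zip_tail (hp : IsPathFrom E u w p) {e : V × V}
    (he : e ∈ p.zip p.tail) : e ∈ E := by
  obtain ⟨i, hi, rfl⟩ := List.mem_iff_getElem.1 he
  simpa using List.isChain_iff_getElem.1 hp.2.2 i (by grind)

theorem IsPathFrom.reflTransGen_of_mem (hp : IsPathFrom E u w p) (hx : x ∈ p) :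
    Relation.ReflTransGen (fun a b => (a, b) ∈ E) u x := by
  refine hp.2.2.induction (Relation.ReflTransGen _ u) p (fun _ _ hab ha => ha.tail hab) ?_ x hx
  intro hne
  rw [(List.head_eq_iff_head?_eq_some hne).2 hp.1]

theorem reaches_iff_reflTransGen :
    Reaches E u w ↔ Relation.ReflTransGen (fun a b => (a, b) ∈ E) u w := by
  constructor
  · rintro ⟨p, hp⟩
    exact hp.reflTransGen_of_mem (List.mem_of_getLast? hp.2.1)
  · intro h
    obtain ⟨p, hne, hchain, rfl, rfl⟩ := List.exists_isChain_ne_nil_of_relationReflTransGen h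
    exact ⟨p, List.head?_eq_some_head hne, List.getLast?_eq_some_getLast hne, hchain⟩

theorem IsPathFrom.reaches_of_mem (hp : IsPathFrom E u w p) (hx : x ∈ p) : Reaches E u x :=
  reaches_iff_reflTransGen.2 (hp.reflTransGen_of_mem hx)

theorem Reaches.trans (huv : Reaches E u v) (hvw : Reaches E v w) : Reaches E u w := by
  rw [reaches_iff_reflTransGen] at huv hvw ⊢
  exact Relation.ReflTransGen.trans huv hvw

theorem Reaches.reverse (h : Reaches E u w) : Reaches (reverseE E) w u :=
  reaches_iff_reflTransGen.2 (Relation.reflTransGen_swap.2 (reaches_iff_reflTransGen.1 h))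

end Paths

theorem reverseE_sdiff_singleton (E : Set (V × V)) (e : V × V) :
    reverseE (E \ {e}) = reverseE E \ {e.swap} := by
  ext ⟨a, b⟩
  simp [reverseE, Prod.ext_iff, and_comm]

section Bridges

variable {E : Set (V × V)} {s u v x : V}

theorem IsBridge.not_reaches_sdiff (hb : IsBridge E s u x) :
    ¬ Reaches (E \ {(u, x)}) s x := by
  rintro ⟨p, hp⟩
  have hmem : (u, x) ∈ p.zip p.tail := hb.2 p (hp.mono Set.sdiff_subset)
  exact (hp.mem_of_mem_zip_tail hmem).2 rfl

theorem IsBridge.dominates_iff_not_reaches_sdiff (hb : IsBridge E s u x) :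
    Dominates E s x v ↔ ¬ Reaches (E \ {(u, x)}) s v := by
  constructor
  · rintro hdom ⟨p, hp⟩
    have hx : x ∈ p := hdom p (hp.mono Set.sdiff_subset)
    exact hb.not_reaches_sdiff (hp.reaches_of_mem hx)
  · intro hnot p hp
    by_contra hx
    exact hnot ⟨p, hp.sdiff_of_notMem hx⟩

end Bridges

namespace TwoEdgeConn

variable {E : Set (V × V)} {v w : V}

theorem reaches_sdiff_iff (h : TwoEdgeConn E v w) (s : V) {e : V × V} (he : e ∈ E) :
    Reaches (E \ {e}) s v ↔ Reaches (E \ {e}) s w := by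
  rcases h with rfl | h
  · rfl
  · exact ⟨fun hv => hv.trans (h e he).1, fun hw => hw.trans (h e he).2⟩

theorem reverse (h : TwoEdgeConn E v w) : TwoEdgeConn (reverseE E) v w := by
  refine h.imp_right fun h e he => ?_
  obtain ⟨hvw, hwv⟩ := h e.swap he
  rw [← e.swap_swap, ← reverseE_sdiff_singleton]
  exact ⟨hwv.reverse, hvw.reverse⟩

theorem markedDominators_eq (h : TwoEdgeConn E v w) (s : V) :
    {x | Marked E s x ∧ Dominates E s x v} = {x | Marked E s x ∧ Dominates E s x w} := by
  ext x
  refine and_congr_right ?_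
  rintro ⟨u, hb⟩
  rw [hb.dominates_iff_not_reaches_sdiff, hb.dominates_iff_not_reaches_sdiff,
    h.reaches_sdiff_iff s hb.1]

end TwoEdgeConn

theorem two_edge_connected_implies_same_subtrees_general
    (E : Set (V × V)) (s v w : V) (h : TwoEdgeConn E v w) :
    {x | Marked E s x ∧ Dominates E s x v} = {x | Marked E s x ∧ Dominates E s x w} ∧
    {x | Marked (reverseE E) s x ∧ Dominates (reverseE E) s x v} =
      {x | Marked (reverseE E) s x ∧ Dominates (reverseE E) s x w} :=
  ⟨h.markedDominators_eq s, h.reverse.markedDominators_eq s⟩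

/-- If `v` and `w` are 2-edge-connected in a strongly connected digraph, then the
marked vertices of `G(s)` dominating `v` are exactly those dominating `w`, and
likewise in `G^R(s)`: `v` and `w` lie in the same subtree of the decomposition of
the dominator tree induced by removing the bridges, in both `G(s)` and `G^R(s)`. -/
theorem two_edge_connected_implies_same_subtrees
    {V : Type*} [Fintype V] (E : Set (V × V)) (s : V)
    (hsc : StronglyConnected E) (v w : V) (h : TwoEdgeConn E v w) :
    {x | Marked E s x ∧ Dominates E s x v} = {x | Marked E s x ∧ Dominates E s x w} ∧
    {x | Marked (reverseE E) s x ∧ Dominates (reverseE E) s x v} =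
      {x | Marked (reverseE E) s x ∧ Dominates (reverseE E) s x w} := by
  exact two_edge_connected_implies_same_subtrees_general E s v w h
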